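/- For every y > 0, limsup_{n→∞} sup_{u ≥ √(N_n y)} (1/√u) log P(Y^{(n)} ≥ u) ≤ −√2·κ, where κ = μ − log μ − 1 > 0. -/

import Mathlib

open scoped Classical
open Filter

/-- Displacement of a ball with hash address `a` when the set `occ` of urns is occupied:
the least `k` such that urn `a + k` (cyclically) is free. -/
noncomputable def hashStep (m : ℕ) (occ : Finset (ZMod m)) (a : ZMod m) : ℕ :=
  if hex : ∃ k : ℕ, a + (k : ZMod m) ∉ occ then Nat.find hex else 0

/-- One insertion step: updates the occupied set and the accumulated total displacement. -/
noncomputable def hashFoldStep (m : ℕ) (p : Finset (ZMod m) × ℕ) (a : ZMod m) :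
    Finset (ZMod m) × ℕ :=
  (insert (a + (hashStep m p.1 a : ZMod m)) p.1, p.2 + hashStep m p.1 a)

/-- Total displacement of a list of hash addresses (processed sequentially). -/
noncomputable def totalDispList (m : ℕ) (l : List (ZMod m)) : ℕ :=
  (l.foldl (hashFoldStep m) (∅, 0)).2

/-- Total displacement `d(h)` of a hash sequence `h` of length `m` and size `n`. -/
noncomputable def totalDisp (m n : ℕ) (h : Fin n → Fin m) : ℕ :=
  totalDispList m ((List.ofFn h).map (fun x => ((x : ℕ) : ZMod m)))

/-- `P(d_{m,n} ≥ a)` where the hash sequence is uniform on `{1,…,m}^n`. -/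
noncomputable def dProbGe (m n : ℕ) (a : ℝ) : ℝ :=
  ((Finset.univ.filter (fun h : Fin n → Fin m => a ≤ (totalDisp m n h : ℝ))).card : ℝ)
    / (m : ℝ) ^ n

/-- The Borel distribution with parameter `μ`: `P(X = l) = e^{-μl} (μl)^{l-1} / l!` for `l ≥ 1`. -/
noncomputable def borelPMF (μ : ℝ) (l : ℕ) : ℝ :=
  Real.exp (-(μ * l)) * (μ * l) ^ (l - 1) / (Nat.factorial l)

/-- `P(Y ≥ u)` where `X` has the Borel distribution with parameter `μ` and, conditionally on
`X = l`, `Y` is distributed as `d_{l,l-1}`. -/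
noncomputable def hashYTail (μ : ℝ) (u : ℝ) : ℝ :=
  ∑' l : ℕ, borelPMF μ (l + 1) * dProbGe (l + 1) l u

/-!
Total displacement at least `u` forces at least `√(2u)` balls, since the `i`-th ball is displaced by
at most the `i - 1` balls placed before it. Hence `P(Y ≥ u) ≤ P(X ≥ √(2u))`, and Stirling's bound
`l ^ l / l! ≤ e ^ l` shows that the Borel law has geometric tails of rate `κ = μ - log μ - 1`.

The logarithm and the upper limit are real valued, so their junk values have to be excluded by a
lower bound `P(Y ≥ u) ≥ e ^ (-C√u)`. When all `4k - 1` balls have addresses among the first `k` of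
`4k` urns, the total displacement is at least `k²`, because the occupied positions sum to at least
`C(4k - 1, 2)`; such sequences have probability `4 ^ (1 - 4k)`.
-/

section Displacement

variable {m n : ℕ}

theorem exists_le_card_add_natCast_notMem {s : Finset (ZMod m)} (hs : s.card < m) (a : ZMod m) :
    ∃ k ≤ s.card, a + (k : ZMod m) ∉ s := by
  have hinj : Set.InjOn (fun k : ℕ => a + (k : ZMod m)) (Finset.range (s.card + 1)) := by
    refine (add_right_injective a).comp_injOn
      ((CharP.natCast_injOn_Iio (ZMod m) m).mono fun k hk => ?_)
    simp only [Finset.coe_range, Set.mem_Iio] at hk ⊢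
    omega
  obtain ⟨x, hx, hxs⟩ := Finset.exists_mem_notMem_of_card_lt_card
    (show s.card < ((Finset.range (s.card + 1)).image fun k : ℕ => a + (k : ZMod m)).card by
      rw [Finset.card_image_of_injOn hinj, Finset.card_range]
      exact Nat.lt_succ_self _)
  obtain ⟨k, hk, rfl⟩ := Finset.mem_image.1 hx
  exact ⟨k, Nat.lt_succ_iff.1 (Finset.mem_range.1 hk), hxs⟩

theorem hashStep_le_card [NeZero m] (occ : Finset (ZMod m)) (a : ZMod m) :
    hashStep m occ a ≤ occ.card := by
  unfold hashStep
  split_ifs with hfree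
  · have hcard : occ.card < m := by
      obtain ⟨k, hk⟩ := hfree
      simpa only [ZMod.card] using Finset.card_lt_univ_of_notMem hk
    obtain ⟨k, hk, hks⟩ := exists_le_card_add_natCast_notMem hcard a
    exact (Nat.find_min' hfree hks).trans hk
  · exact Nat.zero_le _

theorem add_hashStep_notMem {occ : Finset (ZMod m)} (hocc : occ.card < m) (a : ZMod m) :
    a + (hashStep m occ a : ZMod m) ∉ occ := by
  have hfree : ∃ k : ℕ, a + (k : ZMod m) ∉ occ := by
    obtain ⟨k, -, hk⟩ := exists_le_card_add_natCast_notMem hocc a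
    exact ⟨k, hk⟩
  rw [hashStep, dif_pos hfree]
  exact Nat.find_spec hfree

/-- The set of urns occupied after inserting the balls with the listed hash addresses into `m`
empty urns. -/
noncomputable def occupied (m : ℕ) (l : List (ZMod m)) : Finset (ZMod m) :=
  (l.foldl (hashFoldStep m) (∅, 0)).1

theorem occupied_concat (l : List (ZMod m)) (a : ZMod m) :
    occupied m (l ++ [a]) = insert (a + (hashStep m (occupied m l) a : ZMod m)) (occupied m l) := by
  simp only [occupied, List.foldl_concat, hashFoldStep]

theorem totalDispList_concat (l : List (ZMod m)) (a : ZMod m) :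
    totalDispList m (l ++ [a]) = totalDispList m l + hashStep m (occupied m l) a := by
  simp only [totalDispList, occupied, List.foldl_concat, hashFoldStep]

theorem card_occupied_le (l : List (ZMod m)) : (occupied m l).card ≤ l.length := by
  induction l using List.reverseRecOn with
  | nil => simp [occupied]
  | append_singleton l a ih =>
    rw [occupied_concat, List.length_append, List.length_singleton]
    exact (Finset.card_insert_le _ _).trans (Nat.succ_le_succ ih)

theorem card_occupied {l : List (ZMod m)} (hl : l.length ≤ m) :
    (occupied m l).card = l.length := by
  induction l using List.reverseRecOn with
  | nil => simp [occupied]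
  | append_singleton l a ih =>
    rw [List.length_append, List.length_singleton] at hl ⊢
    have hcard := ih (by omega)
    rw [occupied_concat, Finset.card_insert_of_notMem (add_hashStep_notMem (by omega) a), hcard]

theorem totalDispList_le_choose_two [NeZero m] (l : List (ZMod m)) :
    totalDispList m l ≤ l.length.choose 2 := by
  induction l using List.reverseRecOn with
  | nil => simp [totalDispList]
  | append_singleton l a ih =>
    rw [totalDispList_concat, List.length_append, List.length_singleton, Nat.choose_succ_succ',
      Nat.choose_one_right, add_comm]
    exact Nat.add_le_add ((hashStep_le_card _ _).trans (card_occupied_le l)) ih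

theorem sum_val_occupied_le (l : List (ZMod m)) :
    ∑ x ∈ occupied m l, x.val ≤ totalDispList m l + (l.map ZMod.val).sum := by
  induction l using List.reverseRecOn with
  | nil => simp [occupied]
  | append_singleton l a ih =>
    set d := hashStep m (occupied m l) a with hd
    have hinsert : ∑ x ∈ insert (a + (d : ZMod m)) (occupied m l), x.val ≤
        (a + (d : ZMod m)).val + ∑ x ∈ occupied m l, x.val := by
      by_cases hmem : a + (d : ZMod m) ∈ occupied m l
      · rw [Finset.insert_eq_of_mem hmem]
        exact Nat.le_add_left _ _
      · rw [Finset.sum_insert hmem]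
    have hval : (a + (d : ZMod m)).val ≤ a.val + d := by
      refine (ZMod.val_add_le _ _).trans (Nat.add_le_add_left ?_ _)
      rw [ZMod.val_natCast]
      exact Nat.mod_le _ _
    rw [occupied_concat, totalDispList_concat, List.map_append, List.sum_append, ← hd,
      List.map_singleton, List.sum_singleton]
    omega

theorem card_choose_two_le_sum (s : Finset ℕ) : s.card.choose 2 ≤ ∑ x ∈ s, x := by
  induction s using Finset.induction_on_max with
  | empty => simp
  | insert a s hs ih =>
    have ha : a ∉ s := fun hmem => lt_irrefl a (hs a hmem)
    have hcard : s.card ≤ a := by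
      simpa using Finset.card_le_card fun x hx => Finset.mem_range.2 (hs x hx)
    rw [Finset.card_insert_of_notMem ha, Finset.sum_insert ha, Nat.choose_succ_succ',
      Nat.choose_one_right]
    exact Nat.add_le_add hcard ih

theorem choose_two_le_totalDispList_add_sum_val [NeZero m] {l : List (ZMod m)}
    (hl : l.length ≤ m) :
    l.length.choose 2 ≤ totalDispList m l + (l.map ZMod.val).sum := by
  have hsum := card_choose_two_le_sum ((occupied m l).image ZMod.val)
  rw [Finset.card_image_of_injective _ (ZMod.val_injective m), card_occupied hl,
    Finset.sum_image (ZMod.val_injective m).injOn] at hsum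
  exact hsum.trans (sum_val_occupied_le l)

theorem totalDisp_eq_totalDispList_ofFn (h : Fin n → Fin m) :
    totalDisp m n h = totalDispList m (List.ofFn fun i => ((h i : ℕ) : ZMod m)) := by
  have hbind : (do let a ← List.ofFn h; pure (a : ℕ) : List ℕ) =
      (List.ofFn h).map (fun a : Fin m => (a : ℕ)) := List.flatMap_pure_eq_map _ _
  unfold totalDisp
  rw [hbind, List.map_map, List.map_ofFn]
  rfl

theorem totalDisp_le_choose_two [NeZero m] (h : Fin n → Fin m) :
    totalDisp m n h ≤ n.choose 2 := by
  rw [totalDisp_eq_totalDispList_ofFn]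
  simpa only [List.length_ofFn] using
    totalDispList_le_choose_two (List.ofFn fun i => ((h i : ℕ) : ZMod m))

theorem choose_two_le_totalDisp_add_sum [NeZero m] (hnm : n ≤ m) (h : Fin n → Fin m) :
    n.choose 2 ≤ totalDisp m n h + ∑ i, (h i : ℕ) := by
  have hbound := choose_two_le_totalDispList_add_sum_val
    (l := List.ofFn fun i => ((h i : ℕ) : ZMod m)) (by simpa only [List.length_ofFn] using hnm)
  have haddr : ∀ i, ((h i : ℕ) : ZMod m).val = h i := fun i => ZMod.val_natCast_of_lt (h i).2
  simpa only [← totalDisp_eq_totalDispList_ofFn, List.length_ofFn, List.map_ofFn, List.sum_ofFn,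
    Function.comp_apply, haddr] using hbound

end Displacement

section DisplacementProbability

variable {m n : ℕ}

theorem dProbGe_nonneg (m n : ℕ) (a : ℝ) : 0 ≤ dProbGe m n a := by
  unfold dProbGe
  positivity

theorem dProbGe_le_one [NeZero m] (a : ℝ) : dProbGe m n a ≤ 1 := by
  have hm : (0 : ℝ) < (m : ℝ) ^ n := pow_pos (Nat.cast_pos.2 (NeZero.pos m)) n
  rw [dProbGe, div_le_one hm]
  have hcard := Finset.card_le_univ
    (Finset.univ.filter fun h : Fin n → Fin m => a ≤ (totalDisp m n h : ℝ))
  rw [Fintype.card_fun, Fintype.card_fin, Fintype.card_fin] at hcard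
  exact_mod_cast hcard

theorem dProbGe_eq_zero_of_choose_two_lt [NeZero m] {a : ℝ} (ha : (n.choose 2 : ℝ) < a) :
    dProbGe m n a = 0 := by
  rw [dProbGe, Finset.filter_false_of_mem, Finset.card_empty, Nat.cast_zero, zero_div]
  intro h _
  exact not_le.2 (lt_of_le_of_lt (by exact_mod_cast totalDisp_le_choose_two h) ha)

theorem dProbGe_eq_zero_of_lt_sqrt [NeZero m] {a : ℝ} (hn : (n : ℝ) < √(2 * a)) :
    dProbGe m n a = 0 := by
  have hn0 : (0 : ℝ) ≤ n := Nat.cast_nonneg n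
  have hsq := (Real.lt_sqrt hn0).1 hn
  refine dProbGe_eq_zero_of_choose_two_lt ?_
  rw [Nat.cast_choose_two]
  linarith

theorem card_filter_forall_val_lt {c : ℕ} (hc : c ≤ m) :
    (Finset.univ.filter fun h : Fin n → Fin m => ∀ i, (h i : ℕ) < c).card = c ^ n := by
  have hpi : (Finset.univ.filter fun h : Fin n → Fin m => ∀ i, (h i : ℕ) < c) =
      Fintype.piFinset fun _ => Finset.univ.filter fun x : Fin m => (x : ℕ) < c := by
    ext h
    simp only [Finset.mem_filter_univ, Fintype.mem_piFinset]
  rw [hpi, Fintype.card_piFinset_const, Fin.card_filter_val_lt, min_eq_right hc]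

theorem div_pow_le_dProbGe [NeZero m] {c : ℕ} (hc : c ≤ m) (hnm : n ≤ m) {a : ℝ}
    (ha : a + n * c ≤ n * (n + 1) / 2) : ((c : ℝ) / m) ^ n ≤ dProbGe m n a := by
  have hlarge : ∀ h : Fin n → Fin m, (∀ i, (h i : ℕ) < c) → a ≤ totalDisp m n h := by
    intro h hlt
    have hsum : ∑ i, (h i : ℕ) + n ≤ n * c := by
      simpa [Finset.sum_add_distrib] using
        Finset.sum_le_sum fun (i : Fin n) (_ : i ∈ Finset.univ) => Nat.succ_le_of_lt (hlt i)
    have hdisp : ((n.choose 2 : ℕ) : ℝ) + n ≤ totalDisp m n h + n * c := by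
      exact_mod_cast (by linarith [choose_two_le_totalDisp_add_sum hnm h] :
        n.choose 2 + n ≤ totalDisp m n h + n * c)
    rw [Nat.cast_choose_two] at hdisp
    linarith
  rw [div_pow, dProbGe, ← Nat.cast_pow c, ← card_filter_forall_val_lt hc]
  gcongr with h
  exact hlarge h

theorem one_fourth_pow_le_dProbGe {l k : ℕ} (hlk : l + 1 = 4 * k) {u : ℝ}
    (hu : u ≤ (k : ℝ) ^ 2) : (1 / 4 : ℝ) ^ l ≤ dProbGe (l + 1) l u := by
  have hl : (l : ℝ) = 4 * k - 1 := by
    rw [eq_sub_iff_add_eq]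
    exact_mod_cast hlk
  have hk : (1 : ℝ) ≤ k := by exact_mod_cast (by omega : 1 ≤ k)
  have hratio : (k : ℝ) / (l + 1 : ℕ) = 1 / 4 := by
    rw [hlk]
    push_cast
    field_simp
  rw [← hratio]
  refine div_pow_le_dProbGe (by omega) (Nat.le_succ l) ?_
  rw [hl]
  nlinarith

end DisplacementProbability

section Borel

open Real

variable {μ : ℝ}

/-- The exponential decay rate `κ = μ - log μ - 1` of the Borel distribution. -/
noncomputable def borelRate (μ : ℝ) : ℝ := μ - log μ - 1

theorem borelRate_pos (hμ : 0 < μ) (hμ1 : μ ≠ 1) : 0 < borelRate μ := by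
  have := log_lt_sub_one_of_pos hμ hμ1
  unfold borelRate
  linarith

theorem exp_neg_borelRate_lt_one (hμ : 0 < μ) (hμ1 : μ ≠ 1) : exp (-borelRate μ) < 1 :=
  exp_lt_one_iff.2 (neg_neg_of_pos (borelRate_pos hμ hμ1))

theorem borelPMF_nonneg (hμ : 0 ≤ μ) (l : ℕ) : 0 ≤ borelPMF μ l := by
  unfold borelPMF
  positivity

theorem borelPMF_eq (hμ : 0 < μ) {l : ℕ} (hl : l ≠ 0) :
    borelPMF μ l =
      μ⁻¹ * exp (-borelRate μ) ^ l * ((l : ℝ) ^ l / l.factorial * exp (-l) * (l : ℝ)⁻¹) := by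
  obtain ⟨j, rfl⟩ := Nat.exists_eq_add_one_of_ne_zero hl
  have hrate : exp (-borelRate μ) ^ (j + 1) * exp (-(j + 1 : ℕ)) =
      exp (-(μ * (j + 1 : ℕ))) * μ ^ (j + 1) := by
    rw [← exp_log (pow_pos hμ (j + 1)), log_pow, ← exp_nat_mul, ← exp_add, ← exp_add, borelRate]
    ring_nf
  rw [borelPMF, Nat.add_sub_cancel]
  calc exp (-(μ * (j + 1 : ℕ))) * (μ * (j + 1 : ℕ)) ^ j / (j + 1).factorial
      = exp (-(μ * (j + 1 : ℕ))) * μ ^ (j + 1) * μ⁻¹ *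
          (((j + 1 : ℕ) : ℝ) ^ (j + 1) / (j + 1).factorial * ((j + 1 : ℕ) : ℝ)⁻¹) := by
        rw [mul_pow, pow_succ μ, pow_succ ((j + 1 : ℕ) : ℝ)]
        field_simp
    _ = _ := by
        rw [← hrate]
        ring

theorem borelPMF_le (hμ : 0 < μ) {l : ℕ} (hl : l ≠ 0) :
    borelPMF μ l ≤ μ⁻¹ * exp (-borelRate μ) ^ l := by
  have hstirling : (l : ℝ) ^ l / l.factorial * exp (-l) ≤ 1 := by
    rw [exp_neg, ← div_eq_mul_inv, div_le_one (exp_pos _)]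
    exact pow_div_factorial_le_exp _ (Nat.cast_nonneg l) l
  have hinv : (l : ℝ)⁻¹ ≤ 1 :=
    inv_le_one_of_one_le₀ (by exact_mod_cast Nat.one_le_iff_ne_zero.2 hl)
  rw [borelPMF_eq hμ hl]
  exact mul_le_of_le_one_right (by positivity) (mul_le_one₀ hstirling (by positivity) hinv)

theorem le_borelPMF (hμ : 0 < μ) {l : ℕ} (hl : l ≠ 0) :
    μ⁻¹ * exp (-(borelRate μ + 2)) ^ l ≤ borelPMF μ l := by
  have hfactorial : 1 ≤ (l : ℝ) ^ l / l.factorial := by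
    rw [one_le_div (by positivity)]
    exact_mod_cast Nat.factorial_le_pow l
  have hinv : exp (-l) ≤ (l : ℝ)⁻¹ := by
    rw [exp_neg]
    gcongr
    linarith [add_one_le_exp (l : ℝ)]
  calc μ⁻¹ * exp (-(borelRate μ + 2)) ^ l
      = μ⁻¹ * exp (-borelRate μ) ^ l * (1 * exp (-l) * exp (-l)) := by
        simp only [mul_assoc, one_mul, ← exp_nat_mul, ← exp_add]
        ring_nf
    _ ≤ _ := by
        rw [borelPMF_eq hμ hl]
        gcongr

end Borel

section Tail

open Real

variable {μ : ℝ}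

theorem tsum_le_mul_pow_div_of_le_geometric {f : ℕ → ℝ} {C r : ℝ} {k : ℕ} (hf : Summable f)
    (hzero : ∀ l < k, f l = 0) (hr0 : 0 ≤ r) (hr1 : r < 1) (hle : ∀ l, f l ≤ C * r ^ l) :
    ∑' l, f l ≤ C * r ^ k / (1 - r) := by
  have hhead : ∑ l ∈ Finset.range k, f l = 0 :=
    Finset.sum_eq_zero fun l hl => hzero l (Finset.mem_range.1 hl)
  calc ∑' l, f l = ∑' l, f (l + k) := by rw [← hf.sum_add_tsum_nat_add k, hhead, zero_add]
    _ ≤ ∑' l, C * r ^ k * r ^ l := by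
        refine ((summable_nat_add_iff k).2 hf).tsum_le_tsum (fun l => (hle _).trans_eq ?_)
          ((summable_geometric_of_lt_one hr0 hr1).mul_left _)
        rw [pow_add]
        ring
    _ = C * r ^ k / (1 - r) := by
        rw [tsum_mul_left, tsum_geometric_of_lt_one hr0 hr1, div_eq_mul_inv]

theorem borelPMF_mul_dProbGe_nonneg (hμ : 0 ≤ μ) (u : ℝ) (l : ℕ) :
    0 ≤ borelPMF μ (l + 1) * dProbGe (l + 1) l u :=
  mul_nonneg (borelPMF_nonneg hμ _) (dProbGe_nonneg _ _ _)

theorem borelPMF_mul_dProbGe_le (hμ : 0 < μ) (hμ1 : μ ≠ 1) (u : ℝ) (l : ℕ) :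
    borelPMF μ (l + 1) * dProbGe (l + 1) l u ≤ μ⁻¹ * exp (-borelRate μ) ^ l :=
  calc borelPMF μ (l + 1) * dProbGe (l + 1) l u
      ≤ borelPMF μ (l + 1) := mul_le_of_le_one_right (borelPMF_nonneg hμ.le _) (dProbGe_le_one _)
    _ ≤ μ⁻¹ * exp (-borelRate μ) ^ (l + 1) := borelPMF_le hμ l.succ_ne_zero
    _ ≤ μ⁻¹ * exp (-borelRate μ) ^ l := by
        gcongr ?_ * ?_
        exact pow_le_pow_of_le_one (exp_nonneg _) (exp_neg_borelRate_lt_one hμ hμ1).le l.le_succ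

theorem summable_borelPMF_mul_dProbGe (hμ : 0 < μ) (hμ1 : μ ≠ 1) (u : ℝ) :
    Summable fun l : ℕ => borelPMF μ (l + 1) * dProbGe (l + 1) l u :=
  Summable.of_nonneg_of_le (borelPMF_mul_dProbGe_nonneg hμ.le u) (borelPMF_mul_dProbGe_le hμ hμ1 u)
    ((summable_geometric_of_lt_one (exp_nonneg _) (exp_neg_borelRate_lt_one hμ hμ1)).mul_left _)

/-- The constant `C` in the exponential bound `P(X ≥ t) ≤ C e ^ (-κ t)` for a Borel variable `X`. -/
noncomputable def borelTailConst (μ : ℝ) : ℝ := μ⁻¹ / (1 - exp (-borelRate μ))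

theorem borelTailConst_pos (hμ : 0 < μ) (hμ1 : μ ≠ 1) : 0 < borelTailConst μ :=
  div_pos (inv_pos.2 hμ) (sub_pos.2 (exp_neg_borelRate_lt_one hμ hμ1))

theorem hashYTail_le (hμ : 0 < μ) (hμ1 : μ ≠ 1) (u : ℝ) :
    hashYTail μ u ≤ borelTailConst μ * exp (-(borelRate μ * √(2 * u))) := by
  have hr1 := exp_neg_borelRate_lt_one hμ hμ1
  have hceil : exp (-borelRate μ) ^ ⌈√(2 * u)⌉₊ ≤ exp (-(borelRate μ * √(2 * u))) := by
    rw [← exp_nat_mul, exp_le_exp, mul_neg, neg_le_neg_iff, mul_comm]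
    exact mul_le_mul_of_nonneg_right (Nat.le_ceil _) (borelRate_pos hμ hμ1).le
  calc hashYTail μ u
      ≤ μ⁻¹ * exp (-borelRate μ) ^ ⌈√(2 * u)⌉₊ / (1 - exp (-borelRate μ)) := by
        refine tsum_le_mul_pow_div_of_le_geometric (summable_borelPMF_mul_dProbGe hμ hμ1 u)
          (fun l hl => ?_) (exp_nonneg _) hr1 (borelPMF_mul_dProbGe_le hμ hμ1 u)
        rw [dProbGe_eq_zero_of_lt_sqrt (Nat.lt_ceil.1 hl), mul_zero]
    _ = borelTailConst μ * exp (-borelRate μ) ^ ⌈√(2 * u)⌉₊ := mul_div_right_comm _ _ _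
    _ ≤ _ := mul_le_mul_of_nonneg_left hceil (borelTailConst_pos hμ hμ1).le

theorem le_hashYTail (hμ : 0 < μ) (hμ1 : μ ≠ 1) {k : ℕ} (hk : k ≠ 0) {u : ℝ}
    (hu : u ≤ (k : ℝ) ^ 2) :
    μ⁻¹ * exp (-(borelRate μ + 5)) ^ (4 * k) ≤ hashYTail μ u := by
  obtain ⟨l, hl⟩ : ∃ l, l + 1 = 4 * k := ⟨4 * k - 1, by omega⟩
  have hexp : exp (-3) ≤ 1 / 4 := by
    rw [exp_neg, one_div]
    gcongr
    linarith [add_one_le_exp (3 : ℝ)]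
  have hquarter : exp (-3) ^ (l + 1) ≤ dProbGe (l + 1) l u :=
    calc exp (-3) ^ (l + 1) ≤ (1 / 4) ^ (l + 1) := by gcongr
      _ ≤ (1 / 4) ^ l := pow_le_pow_of_le_one (by norm_num) (by norm_num) l.le_succ
      _ ≤ dProbGe (l + 1) l u := one_fourth_pow_le_dProbGe hl hu
  calc μ⁻¹ * exp (-(borelRate μ + 5)) ^ (4 * k)
      = μ⁻¹ * exp (-(borelRate μ + 2)) ^ (l + 1) * exp (-3) ^ (l + 1) := by
        rw [← hl, mul_assoc, ← mul_pow, ← exp_add]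
        ring_nf
    _ ≤ borelPMF μ (l + 1) * dProbGe (l + 1) l u :=
        mul_le_mul (le_borelPMF hμ l.succ_ne_zero) hquarter (by positivity)
          (borelPMF_nonneg hμ.le _)
    _ ≤ hashYTail μ u := (summable_borelPMF_mul_dProbGe hμ hμ1 u).le_tsum l
        fun j _ => borelPMF_mul_dProbGe_nonneg hμ.le u j

theorem hashYTail_pos (hμ : 0 < μ) (hμ1 : μ ≠ 1) (u : ℝ) : 0 < hashYTail μ u := by
  obtain ⟨k, hk⟩ := exists_nat_ge (max 1 u)
  have hk1 : (1 : ℝ) ≤ k := (le_max_left _ _).trans hk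
  have hku : u ≤ (k : ℝ) ^ 2 := by nlinarith [(le_max_right _ _).trans hk]
  exact lt_of_lt_of_le (by positivity)
    (le_hashYTail hμ hμ1 (Nat.one_le_iff_ne_zero.1 (by exact_mod_cast hk1)) hku)

end Tail

section LogTail

open Real

variable {μ : ℝ}

/-- The normalised logarithmic tail `(1 / √u) log P(Y ≥ u)`, where `Y` has Borel parameter `μ`. -/
noncomputable def scaledLogTail (μ u : ℝ) : ℝ := log (hashYTail μ u) / √u

theorem scaledLogTail_le (hμ : 0 < μ) (hμ1 : μ ≠ 1) {t u : ℝ} (ht : 0 < t) (htu : t ≤ u) :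
    scaledLogTail μ u ≤ -(√2 * borelRate μ) + |log (borelTailConst μ)| / √t := by
  have hu : 0 < √u := sqrt_pos.2 (ht.trans_le htu)
  have hlog : log (hashYTail μ u) ≤ log (borelTailConst μ) - √2 * borelRate μ * √u := by
    refine (log_le_log (hashYTail_pos hμ hμ1 u) (hashYTail_le hμ hμ1 u)).trans_eq ?_
    rw [log_mul (borelTailConst_pos hμ hμ1).ne' (exp_ne_zero _), log_exp, sqrt_mul zero_le_two]
    ring
  calc scaledLogTail μ u
      ≤ (log (borelTailConst μ) - √2 * borelRate μ * √u) / √u :=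
        div_le_div_of_nonneg_right hlog hu.le
    _ = -(√2 * borelRate μ) + log (borelTailConst μ) / √u := by
        rw [sub_div, mul_div_cancel_right₀ _ hu.ne']
        ring
    _ ≤ -(√2 * borelRate μ) + |log (borelTailConst μ)| / √t := by
        gcongr
        exact le_abs_self _

theorem exists_ge_le_scaledLogTail (hμ : 0 < μ) (hμ1 : μ ≠ 1) (t : ℝ) :
    ∃ u ≥ t, -(|log μ| + 4 * (borelRate μ + 5)) ≤ scaledLogTail μ u := by
  obtain ⟨k, hk⟩ := exists_nat_ge (max 1 t)
  have hk1 : (1 : ℝ) ≤ k := (le_max_left _ _).trans hk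
  have hkt : t ≤ k := (le_max_right _ _).trans hk
  have hlog : -log μ + (4 * k : ℕ) * -(borelRate μ + 5) ≤ log (hashYTail μ ((k : ℝ) ^ 2)) := by
    rw [← log_inv, ← log_exp (-(borelRate μ + 5)), ← log_pow,
      ← log_mul (inv_ne_zero hμ.ne') (by positivity)]
    exact log_le_log (by positivity)
      (le_hashYTail hμ hμ1 (Nat.one_le_iff_ne_zero.1 (by exact_mod_cast hk1)) le_rfl)
  refine ⟨(k : ℝ) ^ 2, by nlinarith, ?_⟩
  rw [scaledLogTail, sqrt_sq (by linarith), le_div_iff₀ (by linarith)]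
  push_cast at hlog
  nlinarith [le_abs_self (log μ), abs_nonneg (log μ)]

theorem sSup_scaledLogTail_le (hμ : 0 < μ) (hμ1 : μ ≠ 1) {t : ℝ} (ht : 0 < t) :
    sSup (scaledLogTail μ '' Set.Ici t) ≤
      -(√2 * borelRate μ) + |log (borelTailConst μ)| / √t :=
  csSup_le (Set.nonempty_Ici.image _)
    (Set.forall_mem_image.2 fun _ hu => scaledLogTail_le hμ hμ1 ht hu)

theorem le_sSup_scaledLogTail (hμ : 0 < μ) (hμ1 : μ ≠ 1) {t : ℝ} (ht : 0 < t) :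
    -(|log μ| + 4 * (borelRate μ + 5)) ≤ sSup (scaledLogTail μ '' Set.Ici t) := by
  obtain ⟨u, hu, hle⟩ := exists_ge_le_scaledLogTail hμ hμ1 t
  exact le_csSup_of_le
    ⟨_, Set.forall_mem_image.2 fun _ hv => scaledLogTail_le hμ hμ1 ht hv⟩ ⟨u, hu, rfl⟩ hle

theorem continuousAt_borelRate (hμ : μ ≠ 0) : ContinuousAt borelRate μ :=
  (continuousAt_id.sub (continuousAt_log hμ)).sub continuousAt_const

theorem continuousAt_borelTailConst (hμ : 0 < μ) (hμ1 : μ ≠ 1) :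
    ContinuousAt borelTailConst μ :=
  (continuousAt_inv₀ hμ.ne').div
    (continuousAt_const.sub (continuousAt_borelRate hμ.ne').neg.rexp)
    (sub_pos.2 (exp_neg_borelRate_lt_one hμ hμ1)).ne'

end LogTail

theorem hash_Y_tail_upper_general {ι : Type*} {f : Filter ι} [f.NeBot] {ν t : ι → ℝ} {μ : ℝ}
    (hμ : 0 < μ) (hμ1 : μ ≠ 1) (hν : Tendsto ν f (nhds μ)) (ht : Tendsto t f atTop) :
    0 < μ - Real.log μ - 1 ∧
    limsup (fun i => sSup ((fun u : ℝ => Real.log (hashYTail (ν i) u) / √u) '' Set.Ici (t i))) f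
      ≤ -(√2 * (μ - Real.log μ - 1)) := by
  refine ⟨borelRate_pos hμ hμ1, ?_⟩
  have hrate : Tendsto (fun i => borelRate (ν i)) f (nhds (borelRate μ)) :=
    (continuousAt_borelRate hμ.ne').tendsto.comp hν
  have hconst := ((continuousAt_borelTailConst hμ hμ1).tendsto.comp hν).log
    (borelTailConst_pos hμ hμ1).ne'
  have hupper : Tendsto
      (fun i => -(√2 * borelRate (ν i)) + |Real.log (borelTailConst (ν i))| / √(t i)) f
      (nhds (-(√2 * borelRate μ))) := by
    simpa only [add_zero, Function.comp_apply] using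
      (hrate.const_mul √2).neg.add (hconst.abs.div_atTop (Real.tendsto_sqrt_atTop.comp ht))
  have hlower : Tendsto (fun i => -(|Real.log (ν i)| + 4 * (borelRate (ν i) + 5))) f
      (nhds (-(|Real.log μ| + 4 * (borelRate μ + 5)))) :=
    ((hν.log hμ.ne').abs.add ((hrate.add_const 5).const_mul 4)).neg
  have hν0 := hν.eventually_const_lt hμ
  have hν1 := hν.eventually_ne hμ1
  have ht0 := ht.eventually_gt_atTop 0
  have hcobdd := (hlower.isBoundedUnder_ge.mono_ge (by
    filter_upwards [hν0, hν1, ht0] with i h0 h1 hi using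
      le_sSup_scaledLogTail h0 h1 hi)).isCoboundedUnder_le
  refine (limsup_le_limsup ?_ hcobdd hupper.isBoundedUnder_le).trans_eq hupper.limsup_eq
  filter_upwards [hν0, hν1, ht0] with i h0 h1 hi using sSup_scaledLogTail_le h0 h1 hi

/-- **Upper tail bound for `Y⁽ⁿ⁾` in hashing with linear probing.**
For every `y > 0`,
`limsup_n sup_{u ≥ √(N_n y)} (1/√u) log P(Y⁽ⁿ⁾ ≥ u) ≤ -√2 κ`, where
`κ = μ - log μ - 1 > 0`. -/
theorem hash_Y_tail_upper
    (m : ℕ → ℕ) (hlt : ∀ n, n < m n)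
    (hm : Tendsto m atTop atTop)
    (hN : Tendsto (fun n => m n - n) atTop atTop)
    (μ : ℝ) (hμ : μ ∈ Set.Ioo (0 : ℝ) 1)
    (hμn : Tendsto (fun n : ℕ => (n : ℝ) / (m n : ℝ)) atTop (nhds μ))
    (y : ℝ) (hy : 0 < y) :
    0 < μ - Real.log μ - 1 ∧
    limsup (fun n : ℕ =>
        sSup ((fun u : ℝ => Real.log (hashYTail ((n : ℝ) / (m n : ℝ)) u) / Real.sqrt u) ''
          Set.Ici (Real.sqrt (((m n - n : ℕ) : ℝ) * y)))) atTop
      ≤ -(Real.sqrt 2 * (μ - Real.log μ - 1)) := by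
  exact hash_Y_tail_upper_general hμ.1 hμ.2.ne hμn
    (Real.tendsto_sqrt_atTop.comp ((tendsto_natCast_atTop_atTop.comp hN).atTop_mul_const hy))
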